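/- For all integers n ≥ 1 and k ≥ 1, the sum over all Dyck paths P of length 2n of height at most 2 of k^(r(P)−1), where r(P) is the number of returns to zero of P, equals (k+1)^(n−1). (Equivalently, Dyck paths of length 2n and height at most 2 in which each return to the x-axis except the last carries one of k colors are counted by (k+1)^(n−1).) -/

import Mathlib

/-- The step associated to a letter: `true` is an up step `+1`, `false` a down step `-1`. -/
def stepVal (b : Bool) : ℤ := if b then 1 else -1

/-- Partial sum `S_i`: the sum of the first `i` steps of the word `w`. -/
def psum {L : ℕ} (w : Fin L → Bool) (i : ℕ) : ℤ :=
  ∑ j : Fin L, if (j : ℕ) < i then stepVal (w j) else 0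

/-- A Dyck bridge: a `±1` word whose total sum is `0`. -/
def IsBridge {L : ℕ} (w : Fin L → Bool) : Prop := psum w L = 0

/-- A Dyck path: a bridge all of whose partial sums are nonnegative. -/
def IsDyck {L : ℕ} (w : Fin L → Bool) : Prop :=
  IsBridge w ∧ ∀ i : ℕ, 0 ≤ psum w i

/-- A peak at (0-based) position `i`: step `i` is up and step `i+1` is down. -/
def IsPeak {L : ℕ} (w : Fin L → Bool) (i : ℕ) : Prop :=
  ∃ j k : Fin L, (j : ℕ) = i ∧ (k : ℕ) = i + 1 ∧ w j = true ∧ w k = false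

/-- The height of the peak at (0-based) position `i`, i.e. the altitude
reached by its up step. -/
def peakHeight {L : ℕ} (w : Fin L → Bool) (i : ℕ) : ℤ := psum w (i + 1)

/-- A crossing of the x-axis at (1-based) index `i`: `0 < i < L`, `S_i = 0`,
and the steps `w_i`, `w_{i+1}` (1-based) are equal. -/
def IsCrossing {L : ℕ} (w : Fin L → Bool) (i : ℕ) : Prop :=
  0 < i ∧ i < L ∧ psum w i = 0 ∧
    ∃ j k : Fin L, (j : ℕ) + 1 = i ∧ (k : ℕ) = i ∧ w j = w k

/-! Cut a nonempty Dyck path of height at most `2` after its first step, necessarily up. What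
remains is a path from height `1` to `0` in the strip `[0, 2]`, and the returns of the original path
other than its last one are the visits of this path to `0` before its end. Weight such paths by `k`
to the number of those visits. From height `1` the first two steps lead back to `1`, either through
`0`, which contributes a factor `k`, or through `2`, which contributes a factor `1`; so two more
steps multiply the weighted count by `k + 1`. -/

section Words

variable {L : ℕ}

theorem psum_zero (w : Fin L → Bool) : psum w 0 = 0 := by
  simp [psum]

theorem psum_cons_succ (b : Bool) (w : Fin L → Bool) (i : ℕ) :
    psum (Fin.cons b w : Fin (L + 1) → Bool) (i + 1) = stepVal b + psum w i := by
  simp [psum, Fin.sum_univ_succ]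

theorem sum_fin_cons {α M : Type*} [Fintype α] [AddCommMonoid M] (f : (Fin (L + 1) → α) → M) :
    ∑ w, f w = ∑ a, ∑ w : Fin L → α, f (Fin.cons a w) := by
  rw [← (Fin.consEquiv fun _ ↦ α).sum_comp, Fintype.sum_prod_type]
  rfl

/-- The word `w`, read as a lattice path starting at height `h`, stays in the strip `[0, H]` and
ends at height `0`. -/
def IsStripPath (H h : ℤ) (w : Fin L → Bool) : Prop :=
  (∀ i, h + psum w i ∈ Set.Icc 0 H) ∧ h + psum w L = 0

theorem IsStripPath.start_mem_Icc {H h : ℤ} {w : Fin L → Bool} (hw : IsStripPath H h w) :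
    h ∈ Set.Icc 0 H := by
  simpa only [psum_zero, add_zero] using hw.1 0

theorem isStripPath_zero_iff {H : ℤ} {w : Fin L → Bool} :
    IsStripPath H 0 w ↔ IsDyck w ∧ ∀ i, psum w i ≤ H := by
  simp only [IsStripPath, IsDyck, IsBridge, zero_add, Set.mem_Icc, forall_and]
  tauto

theorem isStripPath_cons_iff {H h : ℤ} (b : Bool) (w : Fin L → Bool) :
    IsStripPath H h (Fin.cons b w : Fin (L + 1) → Bool) ↔
      h ∈ Set.Icc 0 H ∧ IsStripPath H (h + stepVal b) w := by
  rw [IsStripPath, IsStripPath, ← Nat.and_forall_add_one]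
  simp only [psum_zero, psum_cons_succ, add_zero, add_assoc, and_assoc]

/-- The number of visits to height `0` of the path `w` started at height `h`, where the initial
point counts and the final point does not. -/
def zeroVisits (h : ℤ) (w : Fin L → Bool) : ℕ :=
  ((Finset.range L).filter fun i ↦ h + psum w i = 0).card

theorem zeroVisits_cons (h : ℤ) (b : Bool) (w : Fin L → Bool) :
    zeroVisits h (Fin.cons b w : Fin (L + 1) → Bool) =
      zeroVisits (h + stepVal b) w + if h = 0 then 1 else 0 := by
  simp only [zeroVisits, Finset.card_filter, Finset.sum_range_succ', psum_cons_succ, psum_zero,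
    add_zero, add_assoc]

theorem card_returns_cons {b : Bool} {w : Fin L → Bool} (hend : stepVal b + psum w L = 0) :
    Nat.card {i : ℕ // 1 ≤ i ∧ i ≤ L + 1 ∧
      psum (Fin.cons b w : Fin (L + 1) → Bool) i = 0} = zeroVisits (stepVal b) w + 1 := by
  have hcount : zeroVisits (stepVal b) w + 1 =
      ((Finset.range (L + 1)).filter fun i ↦ stepVal b + psum w i = 0).card := by
    simp [zeroVisits, Finset.range_add_one, Finset.filter_insert, hend]
  rw [hcount, ← Finset.card_map (addRightEmbedding 1)]
  refine Nat.subtype_card _ fun i ↦ ?_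
  cases i <;> simp [psum_cons_succ]

end Words

section StripSum

variable {R : Type*} [Semiring R]

open scoped Classical in
/-- The generating function of the paths of length `L` from height `h` to `0` in the strip `[0, H]`,
each weighted by `k` to the number of its visits to `0` before its end. -/
noncomputable def stripSum (H : ℤ) (k : R) (L : ℕ) (h : ℤ) : R :=
  ∑ w : Fin L → Bool with IsStripPath H h w, k ^ zeroVisits h w

theorem stripSum_eq_zero_of_notMem {H h : ℤ} (k : R) (L : ℕ) (hh : h ∉ Set.Icc 0 H) :
    stripSum H k L h = 0 := by
  classical
  exact Finset.sum_eq_zero fun w hw ↦ absurd (Finset.mem_filter.1 hw).2.start_mem_Icc hh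

theorem stripSum_length_zero {H h : ℤ} (k : R) (hh : h ∈ Set.Icc 0 H) :
    stripSum H k 0 h = if h = 0 then 1 else 0 := by
  have hpath (w : Fin 0 → Bool) : IsStripPath H h w ↔ h = 0 := by
    simpa [IsStripPath, psum] using fun _ ↦ hh
  classical
  simp only [stripSum, Finset.sum_filter, hpath, zeroVisits, Finset.range_zero]
  simp

theorem stripSum_succ {H h : ℤ} (k : R) (L : ℕ) (hh : h ∈ Set.Icc 0 H) :
    stripSum H k (L + 1) h =
      (if h = 0 then k else 1) * (stripSum H k L (h + 1) + stripSum H k L (h - 1)) := by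
  have hfirst (b : Bool) (w : Fin L → Bool) :
      k ^ zeroVisits h (Fin.cons b w : Fin (L + 1) → Bool) =
        (if h = 0 then k else 1) * k ^ zeroVisits (h + stepVal b) w := by
    rw [zeroVisits_cons]
    split_ifs <;> simp [pow_succ']
  classical
  simp only [stripSum, Finset.sum_filter, sum_fin_cons, Fintype.sum_bool, isStripPath_cons_iff,
    hh, true_and, hfirst, mul_add, Finset.mul_sum, mul_ite, mul_zero]
  rfl

theorem stripSum_two_one (k : R) (m : ℕ) : stripSum 2 k (2 * m + 1) 1 = (k + 1) ^ m := by
  induction m with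
  | zero =>
    rw [stripSum_succ k _ (by simp), stripSum_length_zero k (by simp),
      stripSum_length_zero k (by simp)]
    simp
  | succ m ih =>
    have via_zero : stripSum 2 k (2 * m + 2) 0 = k * stripSum 2 k (2 * m + 1) 1 := by
      rw [stripSum_succ k _ (by simp), stripSum_eq_zero_of_notMem (h := 0 - 1) k _ (by simp)]
      simp
    have via_two : stripSum 2 k (2 * m + 2) 2 = stripSum 2 k (2 * m + 1) 1 := by
      rw [stripSum_succ k _ (by simp), stripSum_eq_zero_of_notMem (h := 2 + 1) k _ (by simp)]
      simp
    calc stripSum 2 k (2 * m + 2 + 1) 1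
        = stripSum 2 k (2 * m + 2) 2 + stripSum 2 k (2 * m + 2) 0 := by
          rw [stripSum_succ k _ (by simp)]
          simp
      _ = (k + 1) * stripSum 2 k (2 * m + 1) 1 := by
          rw [via_zero, via_two, add_mul, one_mul, add_comm]
      _ = (k + 1) ^ (m + 1) := by rw [ih, pow_succ']

open scoped Classical in
theorem sum_pow_returns_sub_one_eq_stripSum (H : ℤ) (k : R) (L : ℕ) :
    (∑ w : Fin (L + 1) → Bool with IsDyck w ∧ ∀ i, psum w i ≤ H,
      k ^ (Nat.card {i : ℕ // 1 ≤ i ∧ i ≤ L + 1 ∧ psum w i = 0} - 1)) = stripSum H k L 1 := by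
  have hup (w : Fin L → Bool) :
      IsStripPath H 0 (Fin.cons true w : Fin (L + 1) → Bool) ↔ IsStripPath H 1 w := by
    rw [isStripPath_cons_iff]
    exact and_iff_right_of_imp fun hw ↦ ⟨le_rfl, zero_le_one.trans hw.start_mem_Icc.2⟩
  have hdown (w : Fin L → Bool) : ¬ IsStripPath H 0 (Fin.cons false w : Fin (L + 1) → Bool) := by
    rw [isStripPath_cons_iff]
    rintro ⟨-, hw⟩
    exact absurd hw.start_mem_Icc.1 (by decide)
  simp only [← isStripPath_zero_iff, stripSum, Finset.sum_filter, sum_fin_cons, Fintype.sum_bool,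
    hup, hdown, if_false, Finset.sum_const_zero, add_zero]
  refine Finset.sum_congr rfl fun w _ ↦ if_ctx_congr Iff.rfl (fun hw ↦ ?_) fun _ ↦ rfl
  rw [card_returns_cons (b := true) hw.2, Nat.add_sub_cancel]
  rfl

open scoped Classical in
theorem stmt_8_general (n : ℕ) (k : R) (hn : 1 ≤ n) :
    (∑ w ∈ Finset.univ.filter
        (fun w : Fin (2 * n) → Bool => IsDyck w ∧ ∀ i : ℕ, psum w i ≤ 2),
      k ^ (Nat.card {i : ℕ // 1 ≤ i ∧ i ≤ 2 * n ∧ psum w i = 0} - 1)) =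
      (k + 1) ^ (n - 1) := by
  obtain ⟨m, rfl⟩ := Nat.exists_eq_add_of_le' hn
  exact (sum_pow_returns_sub_one_eq_stripSum 2 k (2 * m + 1)).trans (stripSum_two_one k m)

end StripSum

open scoped Classical in
/-- For all integers `n ≥ 1` and `k ≥ 1`, the sum over all Dyck
paths `P` of length `2n` of height at most `2` of `k^(r(P) - 1)`, where
`r(P)` is the number of returns to zero of `P`, equals `(k+1)^(n-1)`. -/
theorem stmt_8 (n k : ℕ) (hn : 1 ≤ n) (hk : 1 ≤ k) :
    (∑ w ∈ Finset.univ.filter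
        (fun w : Fin (2 * n) → Bool => IsDyck w ∧ ∀ i : ℕ, psum w i ≤ 2),
      k ^ (Nat.card {i : ℕ // 1 ≤ i ∧ i ≤ 2 * n ∧ psum w i = 0} - 1)) =
      (k + 1) ^ (n - 1) :=
  stmt_8_general n k hn
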